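/- Over the two-letter alphabet {a,b}, the shuffle of L₁ = {aⁿ b a bⁿ a | n ≥ 1} and L₂ = {bᵐ a^{m+1} | m ≥ 1} is not a context-free language. -/

import Mathlib

/-- `IsShuffle u v w` holds iff `w` is an interleaving of `u` and `v`,
i.e. `w = u₁v₁u₂v₂⋯uₙvₙ` for some decompositions `u = u₁⋯uₙ`, `v = v₁⋯vₙ`. -/
inductive IsShuffle {α : Type*} : List α → List α → List α → Prop
  | nil : IsShuffle [] [] []
  | left {a : α} {u v w : List α} : IsShuffle u v w → IsShuffle (a :: u) v (a :: w)
  | right {a : α} {u v w : List α} : IsShuffle u v w → IsShuffle u (a :: v) (a :: w)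

/-- The shuffle `u ⧢ v` of two words, as a set of words. -/
def wordShuffle {α : Type*} (u v : List α) : Set (List α) := {w | IsShuffle u v w}

/-- The shuffle of two languages. -/
def langShuffle {α : Type*} (L₁ L₂ : Set (List α)) : Set (List α) :=
  ⋃ u ∈ L₁, ⋃ v ∈ L₂, wordShuffle u v

/-!
The proof rests on an exchange property of context-free languages. In a parse tree of a long word,
choose subtrees whose frontiers have rapidly increasing lengths: two of them have the same root, and
agree in any prescribed finite colouring, so each may be replaced by the other.

Apply this to `aⁿ bⁿ a bⁿ aⁿ⁺¹`, which lies in the shuffle. Since words of the shuffle have two more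
`a`s than `b`s, the longer of the two frontiers has more `a`s and more `b`s than the shorter one, at
least two of each, so it straddles the boundary of the first `aⁿ bⁿ` or of the last `bⁿ aⁿ⁺¹`;
colouring by these two cases, so does the shorter one. The exchanges produce words `aⁱ bʲ a bᵏ aˡ`
with `n < i` and `k = n` in the first case, with `i = n` and `k < n` in the second, whereas all such
words of the shuffle have `i ≤ k`.
-/

open List (replicate)

section ContextFree

variable {T : Type*} {g : ContextFreeGrammar T}

/-- `Yields g s w` states that the sentential form `s` derives the terminal word `w`, as witnessed
by a forest of parse trees with roots `s` and frontier `w`. Unlike `g.Derives`, it allows induction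
on parse trees. -/
inductive Yields (g : ContextFreeGrammar T) : List (Symbol T g.NT) → List T → Prop
  | nil : Yields g [] []
  | terminal {s : List (Symbol T g.NT)} {w : List T} (t : T) :
      Yields g s w → Yields g (.terminal t :: s) (t :: w)
  | nonterminal {s : List (Symbol T g.NT)} {u w : List T} (r : ContextFreeRule T g.NT) :
      r ∈ g.rules → Yields g r.output u → Yields g s w →
        Yields g (.nonterminal r.input :: s) (u ++ w)

namespace Yields

theorem map_terminal (w : List T) : Yields g (w.map .terminal) w := by
  induction w with
  | nil => exact .nil
  | cons t w ih => exact .terminal t ih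

theorem of_mem_rules {r : ContextFreeRule T g.NT} (hr : r ∈ g.rules) {w : List T}
    (h : Yields g r.output w) : Yields g [.nonterminal r.input] w := by
  simpa only [List.append_nil] using nonterminal r hr h .nil

theorem append {s s' : List (Symbol T g.NT)} {w w' : List T} (h : Yields g s w)
    (h' : Yields g s' w') : Yields g (s ++ s') (w ++ w') := by
  induction h with
  | nil => exact h'
  | terminal t _ ih => exact .terminal t ih
  | nonterminal r hr hu _ _ ih =>
    rw [List.append_assoc]
    exact .nonterminal r hr hu ih

theorem exists_of_append {s s' : List (Symbol T g.NT)} {w : List T} (h : Yields g (s ++ s') w) :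
    ∃ u v, w = u ++ v ∧ Yields g s u ∧ Yields g s' v := by
  induction s generalizing w with
  | nil => exact ⟨[], w, rfl, .nil, h⟩
  | cons _ s ih =>
    cases h with
    | terminal t h =>
      obtain ⟨u, v, rfl, hu, hv⟩ := ih h
      exact ⟨t :: u, v, rfl, .terminal t hu, hv⟩
    | nonterminal r hr hz h =>
      obtain ⟨u, v, rfl, hu, hv⟩ := ih h
      exact ⟨_ ++ u, v, (List.append_assoc ..).symm, .nonterminal r hr hz hu, hv⟩

theorem derives {s : List (Symbol T g.NT)} {w : List T} (h : Yields g s w) :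
    g.Derives s (w.map .terminal) := by
  induction h with
  | nil => exact .refl _
  | terminal t _ ih => exact ih.append_left [.terminal t]
  | nonterminal r hr _ _ ihu ih =>
    rw [List.map_append]
    exact ContextFreeGrammar.Produces.trans_derives ⟨r, hr, .head _⟩
      ((ihu.append_right _).trans (ih.append_left _))

theorem of_produces {s s' : List (Symbol T g.NT)} {w : List T} (hs : g.Produces s s')
    (h : Yields g s' w) : Yields g s w := by
  obtain ⟨r, hr, hrw⟩ := hs
  obtain ⟨p, q, rfl, rfl⟩ := hrw.exists_parts
  obtain ⟨_, z, rfl, hxy, hz⟩ := h.exists_of_append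
  obtain ⟨x, y, rfl, hx, hy⟩ := hxy.exists_of_append
  exact (hx.append (of_mem_rules hr hy)).append hz

end Yields

theorem yields_iff_derives {s : List (Symbol T g.NT)} {w : List T} :
    Yields g s w ↔ g.Derives s (w.map .terminal) := by
  refine ⟨Yields.derives, fun h ↦ ?_⟩
  induction h using Relation.ReflTransGen.head_induction_on with
  | refl => exact .map_terminal w
  | head hs _ ih => exact ih.of_produces hs

/-- A minimal subtree with frontier longer than `K` has frontier of length at most `M * K`, as the
subtrees below its root have frontiers of length at most `K`. -/
theorem Yields.exists_subtree {M K : ℕ} (hM : ∀ r ∈ g.rules, r.output.length ≤ M) (hK : 1 ≤ K)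
    {s : List (Symbol T g.NT)} {w : List T} (h : Yields g s w) (hw : K * s.length < w.length) :
    ∃ r ∈ g.rules, ∃ x u y, w = x ++ u ++ y ∧ K < u.length ∧ u.length ≤ M * K ∧
      Yields g [.nonterminal r.input] u ∧
      ∀ v, Yields g [.nonterminal r.input] v → Yields g s (x ++ v ++ y) := by
  induction h with
  | nil => simp at hw
  | terminal t _ ih =>
    simp only [List.length_cons] at hw
    obtain ⟨r, hr, x, u, y, rfl, hKu, huM, hu, hv⟩ := ih (by lia)
    exact ⟨r, hr, t :: x, u, y, rfl, hKu, huM, hu, fun v h ↦ .terminal t (hv v h)⟩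
  | @nonterminal s z w r hr hz hs ihz ihs =>
    simp only [List.length_cons, List.length_append, Nat.mul_succ] at hw
    by_cases hws : K * s.length < w.length
    · obtain ⟨r', hr', x, u, y, rfl, hKu, huM, hu, hv⟩ := ihs hws
      refine ⟨r', hr', z ++ x, u, y, by simp, hKu, huM, hu, fun v h ↦ ?_⟩
      simpa using Yields.nonterminal r hr hz (hv v h)
    by_cases hzM : z.length ≤ M * K
    · exact ⟨r, hr, [], z, w, rfl, by lia, hzM, .of_mem_rules hr hz, fun v h ↦ h.append hs⟩
    · have hrK : r.output.length * K ≤ M * K := Nat.mul_le_mul_right K (hM r hr)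
      obtain ⟨r', hr', x, u, y, rfl, hKu, huM, hu, hv⟩ := ihz (by lia)
      refine ⟨r', hr', x, u, y ++ w, by simp, hKu, huM, hu, fun v h ↦ ?_⟩
      simpa using Yields.nonterminal r hr (hv v h) hs

theorem exists_replaceable_factor (g : ContextFreeGrammar T) :
    ∃ M, ∀ w ∈ g.language, ∀ K, 1 ≤ K → K < w.length →
      ∃ r : g.rules, ∃ x u y, w = x ++ u ++ y ∧ K < u.length ∧ u.length ≤ M * K ∧
        Yields g [.nonterminal r.1.input] u ∧
        ∀ v, Yields g [.nonterminal r.1.input] v → x ++ v ++ y ∈ g.language := by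
  refine ⟨g.rules.sup (·.output.length), fun w hw K hK hKw ↦ ?_⟩
  obtain ⟨r, hr, x, u, y, hxuy, hKu, huM, hu, hv⟩ := (yields_iff_derives.2 hw).exists_subtree
    (fun r hr ↦ Finset.le_sup (f := (·.output.length)) hr) hK
    (by rwa [List.length_singleton, mul_one])
  exact ⟨⟨r, hr⟩, x, u, y, hxuy, hKu, huM, hu, fun v h ↦ (hv v h).derives⟩

theorem mul_pow_add_le_pow_succ (M c i : ℕ) :
    M * (M + c + 1) ^ i + c ≤ (M + c + 1) ^ (i + 1) := by
  have hpos : 1 ≤ (M + c + 1) ^ i := Nat.one_le_pow _ _ (by lia)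
  calc M * (M + c + 1) ^ i + c
      ≤ M * (M + c + 1) ^ i + (c + 1) * (M + c + 1) ^ i := by nlinarith
    _ = (M + c + 1) ^ (i + 1) := by ring

/-- **Interchange lemma**. The colouring `color` makes the two factorizations agree in any respect
that takes finitely many values, and `c` makes the lengths of their middle factors differ. -/
theorem exists_interchange_of_isContextFree {L : Language T} (hL : L.IsContextFree)
    (C : Type*) [Finite C] (c : ℕ) :
    ∃ N, ∀ w ∈ L, N < w.length → ∀ color : List T → List T → List T → C,
      ∃ x u y x' u' y', w = x ++ u ++ y ∧ w = x' ++ u' ++ y' ∧ color x u y = color x' u' y' ∧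
        u.length + c < u'.length ∧ u'.length ≤ N ∧ x ++ u' ++ y ∈ L ∧ x' ++ u ++ y' ∈ L := by
  obtain ⟨g, rfl⟩ := hL
  have := Fintype.ofFinite C
  obtain ⟨M, hM⟩ := exists_replaceable_factor g
  let B := M + c + 1
  let k := Fintype.card (g.rules × C)
  have hmono {i j : ℕ} (hij : i ≤ j) : B ^ i ≤ B ^ j := Nat.pow_le_pow_right (by lia) hij
  refine ⟨B ^ (k + 1), fun w hw hlen color ↦ ?_⟩
  choose r x u y hxuy hlt hle hyields hreplace using fun i : Fin (k + 1) ↦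
    hM w hw (B ^ (i : ℕ)) (Nat.one_le_pow _ _ (by lia)) ((hmono (by lia)).trans_lt hlen)
  obtain ⟨i, j, hij, heq⟩ := Fintype.exists_ne_map_eq_of_card_lt
    (fun i ↦ (r i, color (x i) (u i) (y i))) (by simp [k])
  wlog hlt_ij : i < j generalizing i j
  · exact this j i hij.symm heq.symm (by lia)
  obtain ⟨hr, hcolor⟩ := Prod.mk.inj heq
  refine ⟨x i, u i, y i, x j, u j, y j, hxuy i, hxuy j, hcolor, ?_, ?_,
    hreplace i _ (hr ▸ hyields j), hreplace j _ (hr ▸ hyields i)⟩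
  · calc (u i).length + c ≤ M * B ^ (i : ℕ) + c := by gcongr; exact hle i
      _ ≤ B ^ (i + 1 : ℕ) := mul_pow_add_le_pow_succ M c i
      _ ≤ B ^ (j : ℕ) := hmono hlt_ij
      _ < (u j).length := hlt j
  · calc (u j).length ≤ M * B ^ (j : ℕ) := hle j
      _ ≤ M * B ^ (j : ℕ) + c := Nat.le_add_right ..
      _ ≤ B ^ (j + 1 : ℕ) := mul_pow_add_le_pow_succ M c j
      _ ≤ B ^ (k + 1) := hmono (by lia)

end ContextFree

section Words

variable {α : Type*}

namespace IsShuffle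

variable {u v w : List α}

theorem perm (h : IsShuffle u v w) : w.Perm (u ++ v) := by
  induction h with
  | nil => exact .nil
  | left _ ih => exact ih.cons _
  | right _ ih => exact (ih.cons _).trans List.perm_middle.symm

theorem sublist_left (h : IsShuffle u v w) : u.Sublist w := by
  induction h with
  | nil => exact .slnil
  | left _ ih => exact ih.cons_cons _
  | right _ ih => exact ih.cons _

theorem append_left (s : List α) (h : IsShuffle u v w) : IsShuffle (s ++ u) v (s ++ w) := by
  induction s with
  | nil => exact h
  | cons _ _ ih => exact ih.left

theorem append_right (s : List α) (h : IsShuffle u v w) : IsShuffle u (s ++ v) (s ++ w) := by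
  induction s with
  | nil => exact h
  | cons _ _ ih => exact ih.right

theorem length_takeWhile_le (p : α → Bool) (h : IsShuffle u v w) :
    (w.takeWhile p).length ≤ (u.takeWhile p).length + (v.takeWhile p).length := by
  induction h with
  | nil => simp
  | left _ ih => grind [List.takeWhile_cons]
  | right _ ih => grind [List.takeWhile_cons]

end IsShuffle

theorem mem_langShuffle {L₁ L₂ : Set (List α)} {w : List α} :
    w ∈ langShuffle L₁ L₂ ↔ ∃ u ∈ L₁, ∃ v ∈ L₂, IsShuffle u v w := by
  simp [langShuffle, wordShuffle]

theorem cons_sublist_of_sublist_append {b : α} {r s z : List α} (hb : b ∉ s)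
    (h : (b :: r).Sublist (s ++ z)) : (b :: r).Sublist z := by
  induction s with
  | nil => exact h
  | cons c s ih =>
    rw [List.mem_cons, not_or] at hb
    exact ih hb.2 (h.of_cons_of_ne hb.1)

/-- `IsBlockWindow P Q c d r s x u y` states that `x u y` is a factorization of the word
`P cʳ dˢ Q` whose middle factor `u = cᵖ dᵗ` straddles or touches the boundary of the blocks `cʳ` and
`dˢ` and reaches neither into `P` nor into `Q`. -/
def IsBlockWindow (P Q : List α) (c d : α) (r s : ℕ) (x u y : List α) : Prop :=
  ∃ p' p t t' : ℕ, p' + p = r ∧ t + t' = s ∧ x = P ++ replicate p' c ∧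
    u = replicate p c ++ replicate t d ∧ y = replicate t' d ++ Q

theorem isBlockWindow_of_append {P Q x y u₁ u₂ : List α} {c d : α} {r s : ℕ}
    (hx : P ++ replicate r c = x ++ u₁) (hy : replicate s d ++ Q = u₂ ++ y)
    (hr : u₁.length ≤ r) (hs : u₂.length ≤ s) : IsBlockWindow P Q c d r s x (u₁ ++ u₂) y := by
  obtain ⟨x', hx'⟩ : u₁ <:+ replicate r c :=
    List.suffix_of_suffix_length_le ⟨x, hx.symm⟩ (List.suffix_append ..) (by simpa)
  obtain ⟨y', hy'⟩ : u₂ <+: replicate s d :=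
    List.prefix_of_prefix_length_le ⟨y, hy.symm⟩ (List.prefix_append ..) (by simpa)
  obtain rfl : x = P ++ x' := by simpa [← hx', ← List.append_assoc] using hx.symm
  obtain rfl : y = y' ++ Q := by simpa [← hy', eq_comm] using hy
  obtain ⟨hpr, hx'_eq, hu₁⟩ := List.append_eq_replicate_iff.1 hx'
  obtain ⟨hts, hu₂, hy'_eq⟩ := List.append_eq_replicate_iff.1 hy'
  exact ⟨x'.length, u₁.length, u₂.length, y'.length, hpr, hts, by rw [← hx'_eq],
    by rw [← hu₁, ← hu₂], by rw [← hy'_eq]⟩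

theorem isBlockWindow_or_prefix_or_suffix {P Q x u y : List α} {c d : α} {r s : ℕ}
    (h : (P ++ replicate r c) ++ (replicate s d ++ Q) = x ++ u ++ y) (hr : u.length ≤ r)
    (hs : u.length ≤ s) : IsBlockWindow P Q c d r s x u y ∨
      x ++ u <+: P ++ replicate r c ∨ u ++ y <:+ replicate s d ++ Q := by
  rcases List.append_eq_append_iff.1 h with ⟨u₂, hxu, hy⟩ | ⟨z, hz, -⟩
  · rcases List.append_eq_append_iff.1 hxu with ⟨u₁, hx, rfl⟩ | ⟨z, -, rfl⟩
    · rw [List.length_append] at hr hs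
      exact .inl (isBlockWindow_of_append hx hy (by lia) (by lia))
    · exact .inr (.inr ⟨z, by rw [hy, List.append_assoc]⟩)
  · exact .inr (.inl ⟨z, hz.symm⟩)

theorem IsBlockWindow.exists_exchange_eq [DecidableEq α] {P Q x u y x' u' y' : List α} {c d : α}
    {r s : ℕ} (hcd : c ≠ d) (h : IsBlockWindow P Q c d r s x u y)
    (h' : IsBlockWindow P Q c d r s x' u' y') :
    ∃ i j, x ++ u' ++ y = P ++ replicate i c ++ (replicate j d ++ Q) ∧
      i + u.count c = r + u'.count c := by
  obtain ⟨p₁, p, t, t₁, rfl, -, rfl, rfl, rfl⟩ := h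
  obtain ⟨-, p', t', -, -, -, -, rfl, -⟩ := h'
  refine ⟨p₁ + p', t' + t₁, by simp only [List.replicate_add, List.append_assoc], ?_⟩
  simp only [List.count_append, List.count_replicate_self, List.count_replicate, beq_iff_eq,
    hcd.symm, if_false, add_zero]
  lia

end Words

section ShuffleLang

variable {α : Type*} {a b : α}

/-- The shuffle of `{aⁿ b a bⁿ a | n ≥ 1}` and `{bᵐ aᵐ⁺¹ | m ≥ 1}`. -/
def shuffleLang (a b : α) : Language α :=
  langShuffle
    {w | ∃ n : ℕ, 1 ≤ n ∧ w = replicate n a ++ [b, a] ++ replicate n b ++ [a]}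
    {w | ∃ m : ℕ, 1 ≤ m ∧ w = replicate m b ++ replicate (m + 1) a}

theorem mem_shuffleLang {w : List α} : w ∈ shuffleLang a b ↔ ∃ n m : ℕ, 1 ≤ n ∧ 1 ≤ m ∧
    IsShuffle (replicate n a ++ [b, a] ++ replicate n b ++ [a])
      (replicate m b ++ replicate (m + 1) a) w := by
  refine mem_langShuffle.trans ⟨?_, ?_⟩
  · rintro ⟨_, ⟨n, hn, rfl⟩, _, ⟨m, hm, rfl⟩, h⟩
    exact ⟨n, m, hn, hm, h⟩
  · rintro ⟨n, m, hn, hm, h⟩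
    exact ⟨_, ⟨n, hn, rfl⟩, _, ⟨m, hm, rfl⟩, h⟩

/-- The word `aⁱ bʲ a bᵏ aˡ`. -/
def blockWord (a b : α) (i j k l : ℕ) : List α :=
  replicate i a ++ (replicate j b ++ a :: (replicate k b ++ replicate l a))

theorem blockWord_mem_shuffleLang {n : ℕ} (hn : 2 ≤ n) :
    blockWord a b n n n (n + 1) ∈ shuffleLang a b := by
  obtain ⟨m, rfl⟩ := Nat.exists_eq_add_of_le' hn
  have h : IsShuffle (replicate (m + 2) a ++ ([b] ++ (a :: replicate (m + 2) b ++ [a])))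
      (replicate (m + 1) b ++ replicate (m + 2) a)
      (replicate (m + 2) a ++ ([b] ++ (replicate (m + 1) b ++
        ((a :: replicate (m + 2) b ++ [a]) ++ replicate (m + 2) a)))) := by
    refine .append_left _ (.append_left _ (.append_right _ ?_))
    simpa using (IsShuffle.nil.append_right (replicate (m + 2) a)).append_left
      (a :: replicate (m + 2) b ++ [a])
  refine mem_shuffleLang.2 ⟨m + 2, m + 1, by lia, by lia, ?_⟩
  simpa [blockWord, List.replicate_succ] using h

theorem sublist_of_replicate_append_mem_shuffleLang (hab : a ≠ b) {i : ℕ} {z : List α}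
    (h : replicate i a ++ z ∈ shuffleLang a b) : (b :: a :: replicate i b).Sublist z := by
  obtain ⟨n, m, -, hm, h⟩ := mem_shuffleLang.1 h
  obtain ⟨m, rfl⟩ := Nat.exists_eq_add_of_le' hm
  -- The second word starts with `b`, so the leading `a`s of the shuffle come from the first word.
  have hin : i ≤ n := by
    classical
    exact Nat.le_of_add_right_le <| by
      simpa [List.replicate_succ, hab.symm] using h.length_takeWhile_le (· == a)
  have hsub : (b :: a :: replicate i b).Sublist (replicate i a ++ z) := by
    refine .trans ?_ h.sublist_left
    simp [hin]
  exact cons_sublist_of_sublist_append (by simp [hab.symm]) hsub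

theorem le_of_blockWord_mem_shuffleLang (hab : a ≠ b) {i j k l : ℕ}
    (h : blockWord a b i j k l ∈ shuffleLang a b) : i ≤ k := by
  classical
  have hsub := sublist_of_replicate_append_mem_shuffleLang hab h
  have hsub' : (a :: replicate i b).Sublist (a :: (replicate k b ++ replicate l a)) :=
    cons_sublist_of_sublist_append (by simp [hab]) ((List.sublist_cons_self ..).trans hsub)
  simpa [List.count_replicate, hab] using hsub'.of_cons_cons.count_le b

variable [DecidableEq α]

theorem count_and_length_of_mem_shuffleLang (hab : a ≠ b) {w : List α}
    (hw : w ∈ shuffleLang a b) :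
    w.count a = w.count b + 2 ∧ w.length = w.count a + w.count b := by
  obtain ⟨n, m, -, -, h⟩ := mem_shuffleLang.1 hw
  have ha : w.count a = n + m + 3 := by
    grind [h.perm.count_eq a]
  have hb : w.count b = n + m + 1 := by
    grind [h.perm.count_eq b]
  have hlen : w.length = 2 * n + 2 * m + 4 := by
    grind [h.perm.length_eq]
  lia

theorem count_add_two_le_of_exchange (hab : a ≠ b) {x u y u' : List α}
    (h : x ++ u ++ y ∈ shuffleLang a b) (h' : x ++ u' ++ y ∈ shuffleLang a b)
    (hlt : u.length + 2 < u'.length) :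
    u.count a + 2 ≤ u'.count a ∧ u.count b + 2 ≤ u'.count b := by
  have hc := count_and_length_of_mem_shuffleLang hab h
  have hc' := count_and_length_of_mem_shuffleLang hab h'
  simp only [List.count_append, List.length_append] at hc hc'
  lia

/-- The factorization `x u y` of `aⁿ bⁿ a bⁿ aⁿ⁺¹` has its middle factor inside the first `aⁿ bⁿ`,
at the boundary of the two blocks. -/
abbrev IsLeftWindow (a b : α) (n : ℕ) : List α → List α → List α → Prop :=
  IsBlockWindow [] (a :: (replicate n b ++ replicate (n + 1) a)) a b n n

/-- The factorization `x u y` of `aⁿ bⁿ a bⁿ aⁿ⁺¹` has its middle factor inside the last `bⁿ aⁿ⁺¹`,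
at the boundary of the two blocks. -/
abbrev IsRightWindow (a b : α) (n : ℕ) : List α → List α → List α → Prop :=
  IsBlockWindow (replicate n a ++ (replicate n b ++ [a])) [] b a n (n + 1)

theorem isLeftWindow_or_isRightWindow (hab : a ≠ b) {n : ℕ} {x u y : List α}
    (h : blockWord a b n n n (n + 1) = x ++ u ++ y) (hu : u.length ≤ n) (hua : 2 ≤ u.count a)
    (hub : 1 ≤ u.count b) : IsLeftWindow a b n x u y ∨ IsRightWindow a b n x u y := by
  by_contra! hnot
  have hleft := (isBlockWindow_or_prefix_or_suffix (by simpa [blockWord] using h) hu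
    hu).resolve_left hnot.1
  have hright := (isBlockWindow_or_prefix_or_suffix (by simpa [blockWord] using h) hu
    (by lia)).resolve_left hnot.2
  have hxu : 1 ≤ (x ++ u).count b := by rw [List.count_append]; lia
  have huy : 1 ≤ (u ++ y).count b := by rw [List.count_append]; lia
  rcases hleft with hleft | hleft
  · exact absurd (hxu.trans (hleft.sublist.count_le b)) (by simp [List.count_replicate, hab])
  rcases hright with hright | hright
  -- Here `u` lies in the middle part `bⁿ a bⁿ`, which has a single `a`.
  · have hxu_le : (x ++ u).count a ≤ n + 1 := by
      simpa [List.count_replicate, hab.symm] using hright.sublist.count_le a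
    have huy_le : (u ++ y).count a ≤ n + 2 := by
      simpa [List.count_replicate, hab.symm] using hleft.sublist.count_le a
    have htotal : n + (n + 2) = (x ++ u ++ y).count a := by
      simp [← h, blockWord, List.count_replicate, hab.symm]
    simp only [List.count_append] at hxu_le huy_le htotal
    lia
  · exact absurd (huy.trans (hright.sublist.count_le b)) (by simp [List.count_replicate, hab])

theorem IsLeftWindow.exchange_notMem (hab : a ≠ b) {n : ℕ} {x u y x' u' y' : List α}
    (h : IsLeftWindow a b n x u y) (h' : IsLeftWindow a b n x' u' y')
    (hlt : u.count a < u'.count a) : x ++ u' ++ y ∉ shuffleLang a b := by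
  obtain ⟨i, j, hij, hcount⟩ := h.exists_exchange_eq hab h'
  intro hmem
  have : i ≤ n := le_of_blockWord_mem_shuffleLang hab (j := j) (l := n + 1)
    (by simpa [hij, blockWord] using hmem)
  lia

theorem IsRightWindow.exchange_notMem (hab : a ≠ b) {n : ℕ} {x u y x' u' y' : List α}
    (h : IsRightWindow a b n x u y) (h' : IsRightWindow a b n x' u' y')
    (hlt : u.count b < u'.count b) : x' ++ u ++ y' ∉ shuffleLang a b := by
  obtain ⟨k, l, hkl, hcount⟩ := h'.exists_exchange_eq hab.symm h
  intro hmem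
  have : n ≤ k := le_of_blockWord_mem_shuffleLang hab (j := n) (l := l)
    (by simpa [hkl, blockWord] using hmem)
  lia

end ShuffleLang

theorem stmt_8_general {α : Type*} {a b : α} (hab : a ≠ b) :
    ¬ (shuffleLang a b).IsContextFree := by
  classical
  intro hL
  obtain ⟨N, hN⟩ := exists_interchange_of_isContextFree hL (Prop × Prop) 2
  let n := N + 2
  have hw : blockWord a b n n n (n + 1) ∈ shuffleLang a b := blockWord_mem_shuffleLang (by lia)
  obtain ⟨x, u, y, x', u', y', h, h', hcolor, hlt, hle, hmem, hmem'⟩ := hN _ hw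
    (by simp [blockWord]; lia) fun x u y ↦ (IsLeftWindow a b n x u y, IsRightWindow a b n x u y)
  obtain ⟨hleft_eq, hright_eq⟩ := Prod.mk.inj hcolor
  obtain ⟨hcount_a, hcount_b⟩ := count_add_two_le_of_exchange hab (h ▸ hw) hmem hlt
  rcases isLeftWindow_or_isRightWindow hab h' (by lia) (by lia) (by lia) with hwin | hwin
  · exact IsLeftWindow.exchange_notMem hab (hleft_eq ▸ hwin) hwin (by lia) hmem
  · exact IsRightWindow.exchange_notMem hab (hright_eq ▸ hwin) hwin (by lia) hmem'

/-- with `a = false`, `b = true`, the shuffle of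
`L₁ = {aⁿ b a bⁿ a | n ≥ 1}` and `L₂ = {bᵐ a^{m+1} | m ≥ 1}` is not context-free. -/
theorem stmt_8 :
    ¬ Language.IsContextFree
      (langShuffle
        {w : List Bool | ∃ n : ℕ, 1 ≤ n ∧
          w = List.replicate n false ++ [true, false] ++ List.replicate n true ++ [false]}
        {w : List Bool | ∃ m : ℕ, 1 ≤ m ∧
          w = List.replicate m true ++ List.replicate (m + 1) false}) :=
  stmt_8_general Bool.false_ne_true
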